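/- For every natural number ℓ ≥ 1 there exists a family c : Fin (2^ℓ) → (Fin (2^{ℓ+1}) → ℝ) with every entry c i t ∈ {0, 1} such that the normalized vectors b i = 2^{−ℓ/2} • c i satisfy: (1) ‖b i‖ = 1 for all i; (2) ⟪b i, b j⟫ = 1/2 for all i ≠ j; and (3) ⟪b i, 2^{−ℓ/2} • (𝟙 − c j)⟫ = 1/2 for all i ≠ j, where 𝟙 denotes the all-ones vector in Fin (2^{ℓ+1}) → ℝ. -/

import Mathlib

/-!
The `2^(ℓ+1) - 1` nontrivial characters of `𝔽₂^(ℓ+1)` are pairwise orthogonal sign vectors of length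
`N = 2^(ℓ+1)` with zero sum. Replacing each sign `u` by the bit `(1 + u) / 2` turns two orthogonal
zero-sum vectors into vectors with dot product `N / 4`, and a zero-sum sign vector into one with
squared norm `N / 2`. Complementing bits negates signs, which preserves orthogonality and zero
sums, so the dot product with a complement is again `N / 4`.
-/

open Fintype
open scoped Matrix

section RealCharacter

variable {A R : Type*} [AddGroup A] [CommRing R] [LinearOrder R] [IsStrictOrderedRing R]

lemma addChar_eq_one_or_eq_neg_one [Finite A] (ψ : AddChar A R) (a : A) : ψ a = 1 ∨ ψ a = -1 := by
  have hpow : ψ a ^ Nat.card A = 1 := by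
    rw [← ψ.map_nsmul_eq_pow, card_nsmul_eq_zero', ψ.map_zero_eq_one]
  exact ((pow_eq_one_iff_of_ne_zero Nat.card_pos.ne').mp hpow).imp_right And.left

lemma addChar_mul_self_eq_one [Finite A] (ψ : AddChar A R) : ψ * ψ = 1 := by
  ext a
  rcases addChar_eq_one_or_eq_neg_one ψ a with h | h <;> simp [h]

lemma addChar_dotProduct_eq_zero [Fintype A] {ψ φ : AddChar A R} (h : ψ ≠ φ) : ⇑ψ ⬝ᵥ ⇑φ = 0 := by
  refine AddChar.sum_eq_zero_iff_ne_zero (ψ := ψ * φ) |>.mpr fun hmul ↦ h ?_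
  calc ψ = ψ * (φ * φ) := by rw [addChar_mul_self_eq_one, mul_one]
    _ = φ := by rw [← mul_assoc, show ψ * φ = 1 from hmul, one_mul]

end RealCharacter

lemma zmodChar_injective {M : Type*} [CommMonoid M] {k : ℕ} [NeZero k] {ζ : M}
    (hζ : IsPrimitiveRoot ζ k) :
    Function.Injective (AddChar.zmodChar k hζ.pow_eq_one) := fun a b hab ↦
  ZMod.val_injective k (hζ.pow_inj a.val_lt b.val_lt hab)

section Walsh

variable {n : Type*} [Fintype n] [DecidableEq n] (R : Type*) [CommRing R]

/-- The Walsh character `y ↦ (-1)^(x ⬝ᵥ y)` of `𝔽₂ⁿ`, whose values form a row of the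
Sylvester–Hadamard matrix. -/
def walshChar (x : n → ZMod 2) : AddChar (n → ZMod 2) R :=
  (AddChar.zmodChar 2 (neg_one_sq (R := R))).compAddMonoidHom
    (dotProductEquiv (ZMod 2) n x).toAddMonoidHom

lemma walshChar_zero : walshChar R (0 : n → ZMod 2) = 0 := by
  ext y
  simp [walshChar]

lemma walshChar_injective [Nontrivial R] (hR : ringChar R ≠ 2) :
    Function.Injective (walshChar R : (n → ZMod 2) → AddChar (n → ZMod 2) R) :=
  (AddChar.compAddMonoidHom_injective_right _
    (zmodChar_injective (IsPrimitiveRoot.neg_one (ringChar R) hR))).comp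
    (LinearMap.toAddMonoidHom_injective.comp (dotProductEquiv (ZMod 2) n).injective)

end Walsh

lemma exists_orthogonal_sign_family {ι κ : Type*} [Fintype ι] [Fintype κ] (R : Type*) [CommRing R]
    [LinearOrder R] [IsStrictOrderedRing R] {n : ℕ} (hκ : card κ = 2 ^ n) (hι : card ι < card κ) :
    ∃ s : ι → κ → R, (∀ i t, s i t = 1 ∨ s i t = -1) ∧ (∀ i, ∑ t, s i t = 0) ∧
      Pairwise fun i j ↦ s i ⬝ᵥ s j = 0 := by
  let V := Fin n → ZMod 2
  obtain ⟨x⟩ : Nonempty (ι ↪ {v : V // v ≠ 0}) := by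
    apply Function.Embedding.nonempty_of_card_le
    have : card {v : V // v ≠ 0} = card κ - 1 := by simp [V, hκ, Fintype.card_subtype_compl]
    lia
  let e : κ ≃ V := equivOfCardEq (by simp [V, hκ])
  have hwalsh : Function.Injective (walshChar R : V → AddChar V R) :=
    walshChar_injective R (by simp [ringChar.eq_zero])
  refine ⟨fun i ↦ walshChar R (x i).val ∘ e, fun i t ↦ addChar_eq_one_or_eq_neg_one _ _,
    fun i ↦ ?_, fun i j hij ↦ ?_⟩
  · have hne : walshChar R (x i).val ≠ 0 := by
      simpa only [walshChar_zero] using hwalsh.ne (x i).property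
    exact (e.sum_comp _).trans (AddChar.sum_eq_zero_iff_ne_zero.mpr hne)
  · have hne : walshChar R (x i).val ≠ walshChar R (x j).val :=
      hwalsh.ne (Subtype.val_injective.ne (x.injective.ne hij))
    exact (comp_equiv_dotProduct_comp_equiv _ _ e).trans (addChar_dotProduct_eq_zero hne)

lemma dotProduct_self_eq_card_of_sign {κ R : Type*} [Fintype κ] [Ring R] {u : κ → R}
    (h : ∀ t, u t = 1 ∨ u t = -1) : u ⬝ᵥ u = card κ := by
  have hsq (t : κ) : u t * u t = 1 := by rcases h t with h | h <;> simp [h]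
  simp [dotProduct, hsq]

section BinaryVector

variable {κ K : Type*} [Field K]

/-- The bits `(1 + u t) / 2` of a vector `u` of signs: the sign `1` becomes the bit `1` and the
sign `-1` the bit `0`. -/
def bitVector (u : κ → K) : κ → K := fun t ↦ (1 + u t) / 2

lemma one_sub_bitVector [NeZero (2 : K)] (u : κ → K) : 1 - bitVector u = bitVector (-u) := by
  ext t
  simp only [bitVector, Pi.sub_apply, Pi.one_apply, Pi.neg_apply]
  field_simp
  ring

lemma bitVector_eq_zero_or_eq_one [NeZero (2 : K)] {u : κ → K} {t : κ}
    (h : u t = 1 ∨ u t = -1) : bitVector u t = 0 ∨ bitVector u t = 1 := by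
  rcases h with h | h
  · right; simp [bitVector, h, one_add_one_eq_two, NeZero.ne]
  · left; simp [bitVector, h]

variable [Fintype κ]

lemma bitVector_dotProduct {u v : κ → K} (hu : ∑ t, u t = 0) (hv : ∑ t, v t = 0) :
    bitVector u ⬝ᵥ bitVector v = (card κ + u ⬝ᵥ v) / 2 ^ 2 := by
  calc bitVector u ⬝ᵥ bitVector v
      = ∑ t, (1 + u t + v t + u t * v t) / 2 ^ 2 := by
        refine Finset.sum_congr rfl fun t _ ↦ ?_
        rw [bitVector, bitVector, div_mul_div_comm, ← sq]
        ring
    _ = (card κ + u ⬝ᵥ v) / 2 ^ 2 := by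
        simp [← Finset.sum_div, Finset.sum_add_distrib, hu, hv, dotProduct]

end BinaryVector

lemma two_rpow_neg_half_smul_dotProduct {κ : Type*} [Fintype κ] (ℓ : ℕ) (u v : κ → ℝ) :
    ((2 : ℝ) ^ (-(ℓ : ℝ) / 2) • u) ⬝ᵥ ((2 : ℝ) ^ (-(ℓ : ℝ) / 2) • v) = (u ⬝ᵥ v) / 2 ^ ℓ := by
  have hscale : (2 : ℝ) ^ (-(ℓ : ℝ) / 2) * (2 : ℝ) ^ (-(ℓ : ℝ) / 2) = ((2 : ℝ) ^ ℓ)⁻¹ := by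
    rw [← Real.rpow_add two_pos, add_halves, Real.rpow_neg two_pos.le, Real.rpow_natCast]
  rw [smul_dotProduct, dotProduct_smul, smul_smul, hscale, smul_eq_mul, inv_mul_eq_div]

theorem exists_normalized_gadget_general {ι κ : Type*} [Fintype ι] [Fintype κ] (ℓ : ℕ)
    (hι : card ι < card κ) (hκ : card κ = 2 ^ (ℓ + 1)) :
    ∃ c : ι → κ → ℝ,
      (∀ i t, c i t = 0 ∨ c i t = 1) ∧
      (∀ i, Real.sqrt (∑ t, ((2 : ℝ) ^ (-(ℓ : ℝ) / 2) • c i) t ^ 2) = 1) ∧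
      (∀ i j, i ≠ j →
        ∑ t, ((2 : ℝ) ^ (-(ℓ : ℝ) / 2) • c i) t * ((2 : ℝ) ^ (-(ℓ : ℝ) / 2) • c j) t
          = 1 / 2) ∧
      (∀ i j, i ≠ j →
        ∑ t, ((2 : ℝ) ^ (-(ℓ : ℝ) / 2) • c i) t *
            ((2 : ℝ) ^ (-(ℓ : ℝ) / 2) • (((fun _ => (1 : ℝ)) : κ → ℝ) - c j)) t
          = 1 / 2) := by
  obtain ⟨s, hsign, hsum, horth⟩ := exists_orthogonal_sign_family (ι := ι) ℝ hκ hι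
  have hdot {u v : κ → ℝ} (hu : ∑ t, u t = 0) (hv : ∑ t, v t = 0) :
      ((2 : ℝ) ^ (-(ℓ : ℝ) / 2) • bitVector u) ⬝ᵥ ((2 : ℝ) ^ (-(ℓ : ℝ) / 2) • bitVector v) =
        1 / 2 + (u ⬝ᵥ v) / 2 ^ (ℓ + 2) := by
    rw [two_rpow_neg_half_smul_dotProduct, bitVector_dotProduct hu hv, hκ]
    push_cast
    field_simp
    ring
  refine ⟨fun i ↦ bitVector (s i), fun i t ↦ bitVector_eq_zero_or_eq_one (hsign i t),
    fun i ↦ ?_, fun i j hij ↦ ?_, fun i j hij ↦ ?_⟩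
  · simp only [Real.sqrt_eq_one, sq]
    refine (hdot (hsum i) (hsum i)).trans ?_
    rw [dotProduct_self_eq_card_of_sign (hsign i), hκ]
    push_cast
    field_simp
    ring
  · exact (hdot (hsum i) (hsum j)).trans (by simp [horth hij])
  · change _ ⬝ᵥ (_ • (1 - bitVector (s j))) = _
    rw [one_sub_bitVector, hdot (hsum i) (by simp [hsum j]), dotProduct_neg, horth hij]
    simp

/-- The normalized gadget: for every `ℓ ≥ 1` there is a family of `2^ℓ` binary vectors `c i`
of dimension `2^(ℓ+1)` whose normalizations `b i = 2^(-ℓ/2) • c i` are unit vectors with all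
pairwise dot products equal to `1/2`, and whose dot products with the normalized binary
complements `2^(-ℓ/2) • (𝟙 - c j)` of the other vectors also equal `1/2`. -/
theorem exists_normalized_gadget (ℓ : ℕ) (hℓ : 1 ≤ ℓ) :
    ∃ c : Fin (2 ^ ℓ) → (Fin (2 ^ (ℓ + 1)) → ℝ),
      (∀ i t, c i t = 0 ∨ c i t = 1) ∧
      (∀ i, Real.sqrt (∑ t, ((2 : ℝ) ^ (-(ℓ : ℝ) / 2) • c i) t ^ 2) = 1) ∧
      (∀ i j, i ≠ j →
        ∑ t, ((2 : ℝ) ^ (-(ℓ : ℝ) / 2) • c i) t * ((2 : ℝ) ^ (-(ℓ : ℝ) / 2) • c j) t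
          = 1 / 2) ∧
      (∀ i j, i ≠ j →
        ∑ t, ((2 : ℝ) ^ (-(ℓ : ℝ) / 2) • c i) t *
            ((2 : ℝ) ^ (-(ℓ : ℝ) / 2) • (((fun _ => (1 : ℝ)) : Fin (2 ^ (ℓ + 1)) → ℝ) - c j)) t
          = 1 / 2) :=
  exists_normalized_gadget_general ℓ (by simp [pow_succ]) (by simp)
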